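/- Let F be a union-closed family on n elements with m sets. If H(F) ≤ 3 and m > 2n, then there exists an element x ∈ {1, …, n} that belongs to more than m/2 of the sets of F. -/

import Mathlib

open Finset

/-- The minimal members of a family of finite sets: those `A` such that no
member `B ≠ A` satisfies `B ⊆ A`. -/
def minimalSets (G : Finset (Finset ℕ)) : Finset (Finset ℕ) :=
  G.filter fun A => ∀ B ∈ G, B ≠ A → ¬ B ⊆ A

/-- The family remaining after removing the first `i` layers of the height
decomposition. -/
def rest (F : Finset (Finset ℕ)) : ℕ → Finset (Finset ℕ)
  | 0 => F
  | i + 1 => rest F i \ minimalSets (rest F i)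

/-- The `i`-th layer `π_i` of the height decomposition (meaningful for `i ≥ 1`):
`π_{i+1}` is the family of minimal members of `F \ (π₁ ∪ ⋯ ∪ π_i)`. -/
def layer (F : Finset (Finset ℕ)) : ℕ → Finset (Finset ℕ)
  | 0 => ∅
  | i + 1 => minimalSets (rest F i)

/-- The height number `H(F)`: the least `H` with `F = π₁ ∪ ⋯ ∪ π_H`,
equivalently the least `H` with `rest F H = ∅`. -/
noncomputable def height (F : Finset (Finset ℕ)) : ℕ :=
  sInf {H : ℕ | rest F H = ∅}

/-- `F` is a union-closed family on `n` elements with `m` sets: a finite family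
of `m` distinct nonempty finite sets whose union is `{1, …, n}`, closed under
unions. -/
def IsUC (F : Finset (Finset ℕ)) (n m : ℕ) : Prop :=
  F.Nonempty ∧ F.card = m ∧ (∀ A ∈ F, A.Nonempty) ∧
    F.sup id = Finset.Icc 1 n ∧ ∀ A ∈ F, ∀ B ∈ F, A ∪ B ∈ F

/-- The tent `T(A)` of a set `A` of level `i ≥ 2`: the family
`{A} ∪ {B ∈ π_{i−1} : B ⊆ A}`. -/
def tent (F : Finset (Finset ℕ)) (i : ℕ) (A : Finset ℕ) : Finset (Finset ℕ) :=
  insert A ((layer F (i - 1)).filter fun B => B ⊆ A)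

/-- `F` is separating: every pair of distinct elements of `{1, …, n}` is
separated by some member of `F`. -/
def Separating (F : Finset (Finset ℕ)) (n : ℕ) : Prop :=
  ∀ x ∈ Finset.Icc 1 n, ∀ y ∈ Finset.Icc 1 n, x ≠ y →
    ∃ A ∈ F, (x ∈ A ∧ y ∉ A) ∨ (y ∈ A ∧ x ∉ A)

/-!
The layers of the height decomposition are antichains, so a chain meets each of them at most once
and `H(F) ≤ 3` leaves no chain of four members.

Fix an element `x` of the ground set. The members of `F` that avoid `x`, if there are any, have a
largest one `C`, which is properly contained in the ground set. As there is no chain of four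
members, the other members avoiding `x` form an antichain, so any two of them have union `C`. Their
complements in `C` are therefore disjoint and nonempty, and there are at most `|C| < n` of them.
Hence at most `n < m / 2` members avoid `x`.
-/

section ChainHeight

variable {α : Type*} {s t : Set α} {a : α}

theorem chainHeight_add_one_le [Preorder α] (hst : s ⊆ t) (ha : a ∈ t) (hsa : ∀ b ∈ s, b < a) :
    s.chainHeight (· < ·) + 1 ≤ t.chainHeight (· < ·) := by
  have : Nonempty {c // c ⊆ s ∧ IsChain (· < ·) c} := ⟨∅, by simp⟩
  rw [s.chainHeight_eq_iSup, ENat.iSup_add]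
  refine iSup_le fun ⟨c, hcs, hc⟩ => ?_
  have hac : a ∉ c := fun h => lt_irrefl a (hsa a (hcs h))
  rw [← Set.encard_insert_of_notMem hac]
  exact Set.encard_le_chainHeight_of_isChain _ _ (Set.insert_subset ha (hcs.trans hst))
    (hc.insert fun b hb _ => .inr (hsa b (hcs hb)))

theorem isAntichain_of_chainHeight_le_one [PartialOrder α] (hs : s.chainHeight (· < ·) ≤ 1) :
    IsAntichain (· ≤ ·) s := by
  intro a ha b hb hab hle
  have hchain : IsChain (· < ·) {a, b} :=
    (IsChain.singleton (a := b)).insert fun c hc _ => .inl (hc ▸ hle.lt_of_ne hab)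
  have := Set.encard_le_chainHeight_of_isChain s _ (Set.pair_subset ha hb) hchain
  rw [Set.encard_pair hab] at this
  exact absurd (this.trans hs) (by norm_num)

end ChainHeight

section Height

variable {F G : Finset (Finset ℕ)} {A : Finset ℕ} {i : ℕ}

theorem mem_minimalSets : A ∈ minimalSets G ↔ Minimal (· ∈ G) A := by
  simp only [minimalSets, mem_filter, minimal_iff, and_congr_right_iff]
  exact fun _ => forall₂_congr fun B _ => by rw [eq_comm (a := A), not_imp_not]

theorem isAntichain_minimalSets (G : Finset (Finset ℕ)) :
    IsAntichain (· ≤ ·) (minimalSets G : Set (Finset ℕ)) :=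
  (setOfPred_minimal_antichain (· ∈ G)).subset fun _ => mem_minimalSets.1

theorem rest_succ_ssubset (h : (rest F i).Nonempty) : rest F (i + 1) ⊂ rest F i := by
  obtain ⟨A, hA⟩ := exists_minimal h
  exact sdiff_ssubset (filter_subset _ _) ⟨A, mem_minimalSets.2 hA⟩

theorem rest_height (F : Finset (Finset ℕ)) : rest F (height F) = ∅ := by
  have exhausted : ∃ H, rest F H = ∅ := by
    by_contra! h
    exact not_strictAnti_of_wellFoundedLT _
      (strictAnti_nat_of_succ_lt fun i => rest_succ_ssubset (h i))
  exact Nat.sInf_mem exhausted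

theorem mem_rest_or_exists_mem_layer (hA : A ∈ F) (i : ℕ) :
    A ∈ rest F i ∨ ∃ j < i, A ∈ layer F (j + 1) := by
  induction i with
  | zero => exact .inl hA
  | succ i ih =>
    rcases ih with hrest | ⟨j, hj, hlayer⟩
    · by_cases hmin : A ∈ minimalSets (rest F i)
      · exact .inr ⟨i, i.lt_succ_self, hmin⟩
      · exact .inl (mem_sdiff.2 ⟨hrest, hmin⟩)
    · exact .inr ⟨j, hj.trans i.lt_succ_self, hlayer⟩

theorem exists_mem_layer (hA : A ∈ F) : ∃ i < height F, A ∈ layer F (i + 1) :=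
  (mem_rest_or_exists_mem_layer hA _).resolve_left (by simp [rest_height])

theorem chainHeight_le_height (F : Finset (Finset ℕ)) :
    (F : Set (Finset ℕ)).chainHeight (· < ·) ≤ height F := by
  refine iSup_le fun ⟨c, hcF, hc⟩ => ?_
  choose! level hlevel hmem using fun A (hA : A ∈ c) => exists_mem_layer (hcF hA)
  have level_injOn : Set.InjOn level c := fun A hA B hB hAB => by
    by_contra hne
    have hanti := isAntichain_minimalSets (rest F (level A))
    have hB_mem : B ∈ minimalSets (rest F (level A)) := hAB ▸ hmem B hB
    rcases hc hA hB hne with hlt | hlt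
    · exact hanti (hmem A hA) hB_mem hne hlt.le
    · exact hanti hB_mem (hmem A hA) (Ne.symm hne) hlt.le
  calc c.encard ≤ (range (height F) : Set ℕ).encard :=
        Set.encard_le_encard_of_injOn (fun A hA => mem_coe.2 (mem_range.2 (hlevel A hA)))
          level_injOn
    _ = height F := by rw [Set.encard_coe_eq_coe_finsetCard, card_range]

end Height

section UnionClosed

variable {α : Type*} [DecidableEq α] {F S : Finset (Finset α)} {C : Finset α} {x : α}

theorem card_le_of_pairwise_union_eq (hS : ∀ A ∈ S, A ⊂ C)
    (hunion : (S : Set (Finset α)).Pairwise fun A B => A ∪ B = C) : #S ≤ #C := by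
  have disjoint_compl : (S : Set (Finset α)).PairwiseDisjoint (C \ ·) := fun A hA B hB hAB =>
    disjoint_iff_inter_eq_empty.2 <| by
      rw [← sdiff_union_distrib, hunion hA hB hAB, Finset.sdiff_self]
  calc #S ≤ #(S.biUnion (C \ ·)) :=
        card_le_card_biUnion disjoint_compl fun A hA => sdiff_nonempty.2 (hS A hA).2
    _ ≤ #C := card_le_card (biUnion_subset.2 fun _ _ => sdiff_subset)

theorem lt_sup_of_mem_erase {A : Finset α} (hA : A ∈ F.erase (F.sup id)) : A < F.sup id :=
  (le_sup (f := id) (mem_of_mem_erase hA)).lt_of_ne (ne_of_mem_erase hA)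

theorem card_erase_sup_le_of_isAntichain (hF : SupClosed (F : Set (Finset α)))
    (hanti : IsAntichain (· ≤ ·) (F.erase (F.sup id) : Set (Finset α))) :
    #(F.erase (F.sup id)) ≤ #(F.sup id) := by
  refine card_le_of_pairwise_union_eq (fun A => lt_sup_of_mem_erase) fun A hA B hB hAB => ?_
  by_contra hne
  have hAB_mem : A ∪ B ∈ F.erase (F.sup id) :=
    mem_erase.2 ⟨hne, hF (mem_of_mem_erase hA) (mem_of_mem_erase hB)⟩
  have hA_eq : A = A ∪ B := hanti.eq hA hAB_mem subset_union_left
  have hB_eq : B = A ∪ B := hanti.eq hB hAB_mem subset_union_right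
  exact hAB (hA_eq.trans hB_eq.symm)

theorem sup_id_mem (hF : SupClosed (F : Set (Finset α))) (hne : F.Nonempty) : F.sup id ∈ F :=
  hF.finsetSup_mem hne fun _ hA => hA

theorem card_le_card_sup_add_one (hF : SupClosed (F : Set (Finset α)))
    (hchain : (F : Set (Finset α)).chainHeight (· < ·) ≤ 2) : #F ≤ #(F.sup id) + 1 := by
  rcases F.eq_empty_or_nonempty with rfl | hne
  · simp
  have hC : F.sup id ∈ F := sup_id_mem hF hne
  have hanti : IsAntichain (· ≤ ·) (F.erase (F.sup id) : Set (Finset α)) := by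
    refine isAntichain_of_chainHeight_le_one ((ENat.add_le_add_iff_right ENat.one_ne_top).1 ?_)
    exact (chainHeight_add_one_le (erase_subset _ _) hC fun _ => lt_sup_of_mem_erase).trans hchain
  calc #F = #(F.erase (F.sup id)) + 1 := (card_erase_add_one hC).symm
    _ ≤ #(F.sup id) + 1 := Nat.add_le_add_right (card_erase_sup_le_of_isAntichain hF hanti) 1

theorem supClosed_filter_notMem (hF : SupClosed (F : Set (Finset α))) (x : α) :
    SupClosed (({A ∈ F | x ∉ A} : Finset (Finset α)) : Set (Finset α)) := by
  rw [coe_filter]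
  exact hF.inter fun _ hA _ hB => notMem_union.2 ⟨hA, hB⟩

theorem card_filter_notMem_le_card_sup (hF : SupClosed (F : Set (Finset α)))
    (hchain : (F : Set (Finset α)).chainHeight (· < ·) ≤ 3) (hx : x ∈ F.sup id) :
    #{A ∈ F | x ∉ A} ≤ #(F.sup id) := by
  set G : Finset (Finset α) := {A ∈ F | x ∉ A}
  have hGF : G ⊆ F := filter_subset _ _
  have hG : SupClosed (G : Set (Finset α)) := supClosed_filter_notMem hF x
  rcases G.eq_empty_or_nonempty with hempty | hne
  · simp [hempty]
  have hlt : G.sup id < F.sup id :=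
    (sup_mono hGF).lt_of_ne fun h => (mem_filter.1 (sup_id_mem hG hne)).2 (h ▸ hx)
  have hG_chain : (G : Set (Finset α)).chainHeight (· < ·) ≤ 2 := by
    refine (ENat.add_le_add_iff_right ENat.one_ne_top).1 (le_trans ?_ hchain)
    exact chainHeight_add_one_le hGF (sup_id_mem hF (hne.mono hGF))
      fun A hA => (le_sup (f := id) hA).trans_lt hlt
  calc #G ≤ #(G.sup id) + 1 := card_le_card_sup_add_one hG hG_chain
    _ ≤ #(F.sup id) := card_lt_card hlt

theorem frankl_of_height_le_three_of_large_general (hF : SupClosed (F : Set (Finset α)))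
    (hchain : (F : Set (Finset α)).chainHeight (· < ·) ≤ 3) (hlarge : 2 * #(F.sup id) < #F)
    (hx : x ∈ F.sup id) : #F < 2 * #{A ∈ F | x ∈ A} := by
  have avoiding := card_filter_notMem_le_card_sup hF hchain hx
  have split := card_filter_add_card_filter_not (s := F) (x ∈ ·)
  omega

end UnionClosed

/-- If `H(F) ≤ 3` and `m > 2n`, then some element of `{1, …, n}`
belongs to more than `m/2` of the sets of `F`. -/
theorem frankl_of_height_le_three_of_large (n m : ℕ) (F : Finset (Finset ℕ))
    (hF : IsUC F n m) (h3 : height F ≤ 3) (hm : m > 2 * n) :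
    ∃ x ∈ Finset.Icc 1 n, 2 * (F.filter fun A => x ∈ A).card > m := by
  obtain ⟨⟨A, hA⟩, rfl, hpos, hsup, hunion⟩ := hF
  obtain ⟨x, hx⟩ : (F.sup id).Nonempty := (hpos A hA).mono (le_sup (f := id) hA)
  have hchain := (chainHeight_le_height F).trans (Nat.cast_le.2 h3)
  exact ⟨x, hsup ▸ hx, frankl_of_height_le_three_of_large_general
    (fun A hA B hB => hunion A hA B hB) hchain (by simpa [hsup] using hm) hx⟩
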